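/- For every w ∈ Ξ_N, the stabilizer G_w = {g ∈ G : g·w = w} is a compact subset of GL(3,ℝ). Equivalently: for all g₀ ∈ SO_e(1,2) and z ∈ ℂ, the stabilizer in SO_e(1,2) of the point g₀·n_z·x₀ ∈ ℂ³ is compact. -/

import Mathlib

open Matrix

/-- The Lorentz form `diag(1,-1,-1)`. -/
noncomputable def eta3 : Matrix (Fin 3) (Fin 3) ℝ := Matrix.diagonal ![1, -1, -1]

/-- `G = SO_e(1,2)`. -/
noncomputable def Gso : Set (Matrix (Fin 3) (Fin 3) ℝ) :=
  {g | gᵀ * eta3 * g = eta3 ∧ g.det = 1 ∧ 0 < g 0 0}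

/-- Action of a real matrix on `ℂ³`. -/
noncomputable def act (g : Matrix (Fin 3) (Fin 3) ℝ) (z : Fin 3 → ℂ) : Fin 3 → ℂ :=
  (g.map (fun x : ℝ => (x : ℂ))).mulVec z

/-- The unipotent matrices `n_z`. -/
noncomputable def nmat (z : ℂ) : Matrix (Fin 3) (Fin 3) ℂ :=
  !![1 + z ^ 2 / 2, z, -(z ^ 2) / 2;
     z, 1, -z;
     z ^ 2 / 2, z, 1 - z ^ 2 / 2]

/-- The base point `x₀ = (1,0,0)`. -/
def x0c : Fin 3 → ℂ := ![1, 0, 0]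

/-- `Ξ_N = G·N_ℂ·x₀`. -/
noncomputable def XiN : Set (Fin 3 → ℂ) :=
  {w | ∃ g ∈ Gso, ∃ z : ℂ, w = act g ((nmat z).mulVec x0c)}

lemma act_mul' (A B : Matrix (Fin 3) (Fin 3) ℝ) (w : Fin 3 → ℂ) :
    act (A * B) w = act A (act B w) := by
  unfold act
  rw [Matrix.mulVec_mulVec]
  congr 1
  exact Matrix.map_mul (f := Complex.ofRealHom)

lemma act_one' (w : Fin 3 → ℂ) : act 1 w = w := by
  have : (1 : Matrix (Fin 3) (Fin 3) ℝ).map (fun x : ℝ => (x : ℂ)) = 1 :=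
    Matrix.map_one _ (by simp) (by simp)
  unfold act
  rw [this, Matrix.one_mulVec]

lemma eta_sq : eta3 * eta3 = 1 := by
  unfold eta3
  rw [Matrix.diagonal_mul_diagonal, ← Matrix.diagonal_one]
  congr 1
  funext i
  fin_cases i <;> simp

noncomputable def nre (a : ℝ) : Matrix (Fin 3) (Fin 3) ℝ :=
  !![1 + a ^ 2 / 2, a, -(a ^ 2) / 2;
     a, 1, -a;
     a ^ 2 / 2, a, 1 - a ^ 2 / 2]

lemma nre_orth (a : ℝ) : (nre a)ᵀ * eta3 * nre a = eta3 := by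
  unfold nre eta3
  ext i j
  fin_cases i <;> fin_cases j <;>
    simp [Matrix.mul_apply, Fin.sum_univ_three, Matrix.diagonal] <;> ring

lemma nmat_split (z : ℂ) : (nmat z).mulVec x0c =
    act (nre z.re) ((nmat (z.im * Complex.I)).mulVec x0c) := by
  have h : z = z.re + z.im * Complex.I := (Complex.re_add_im z).symm
  generalize z.re = a at *
  generalize z.im = b at *
  subst h
  have hI : Complex.I ^ 2 = -1 := Complex.I_sq
  funext i
  fin_cases i <;>
    simp [nmat, x0c, act, nre, Matrix.mulVec, dotProduct, Fin.sum_univ_three] <;> ring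

lemma orth_entries (h : Matrix (Fin 3) (Fin 3) ℝ) (ho : hᵀ * eta3 * h = eta3) :
    (h 0 0 ^ 2 - h 1 0 ^ 2 - h 2 0 ^ 2 = 1 ∧ h 0 1 ^ 2 - h 1 1 ^ 2 - h 2 1 ^ 2 = -1 ∧
      h 0 2 ^ 2 - h 1 2 ^ 2 - h 2 2 ^ 2 = -1) ∧
    (h 0 0 * h 0 1 - h 1 0 * h 1 1 - h 2 0 * h 2 1 = 0 ∧
      h 0 0 * h 0 2 - h 1 0 * h 1 2 - h 2 0 * h 2 2 = 0 ∧
      h 0 1 * h 0 2 - h 1 1 * h 1 2 - h 2 1 * h 2 2 = 0) := by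
  have e := fun i j => congrFun (congrFun ho i) j
  have e00 := e 0 0
  have e11 := e 1 1
  have e22 := e 2 2
  have e01 := e 0 1
  have e02 := e 0 2
  have e12 := e 1 2
  simp [eta3, Matrix.mul_apply, Fin.sum_univ_three, Matrix.diagonal] at e00 e11 e22 e01 e02 e12
  refine ⟨⟨?_, ?_, ?_⟩, ?_, ?_, ?_⟩ <;> linarith

lemma key (b : ℝ) (h : Matrix (Fin 3) (Fin 3) ℝ) (ho : hᵀ * eta3 * h = eta3)
    (hd : h.det = 1)
    (hf : act h ((nmat (b * Complex.I)).mulVec x0c) = (nmat (b * Complex.I)).mulVec x0c) :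
    ∀ i j, h i j ∈ Set.Icc (-1 : ℝ) 1 := by
  obtain ⟨⟨q0, q1, q2⟩, q01, q02, q12⟩ := orth_entries h ho
  have r : ∀ i, h i 0 * (1 - b ^ 2 / 2) + h i 2 * (-b ^ 2 / 2) = ![1 - b ^ 2 / 2, 0, -b ^ 2 / 2] i
      ∧ h i 1 * b = ![0, b, 0] i := by
    intro i
    have hi := congrFun hf i
    have h1 := congrArg Complex.re hi
    have h2 := congrArg Complex.im hi
    have e1 : (nmat (b * Complex.I)).mulVec x0c =
        ![((1 - b ^ 2 / 2 : ℝ) : ℂ), b * Complex.I, ((-b ^ 2 / 2 : ℝ) : ℂ)] := by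
      funext i
      fin_cases i <;>
        simp [nmat, x0c, Matrix.mulVec, dotProduct, Fin.sum_univ_three, mul_pow] <;> ring
    rw [e1] at h1 h2
    simp only [act, Matrix.mulVec, dotProduct, Fin.sum_univ_three, Matrix.map_apply] at h1 h2
    constructor
    · fin_cases i <;> simp [-Complex.ofReal_sub, -Complex.ofReal_div, -Complex.ofReal_neg, -Complex.ofReal_pow] at h1 ⊢ <;> linarith
    · fin_cases i <;> simp [-Complex.ofReal_sub, -Complex.ofReal_div, -Complex.ofReal_neg, -Complex.ofReal_pow] at h2 ⊢ <;> simpa using h2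
  obtain ⟨a0, c0⟩ := r 0
  obtain ⟨a1, c1⟩ := r 1
  obtain ⟨a2, c2⟩ := r 2
  simp at a0 a1 a2 c0 c1 c2
  rw [Matrix.det_fin_three] at hd
  have sq1 : ∀ x : ℝ, x ^ 2 ≤ 1 → x ∈ Set.Icc (-1 : ℝ) 1 := fun x hx =>
    ⟨by nlinarith, by nlinarith⟩
  by_cases hb : b = 0
  · subst hb
    simp at a0 a1 a2
    rw [a0, a1, a2] at q01 q02
    have k01 : h 0 1 = 0 := by linarith
    have k02 : h 0 2 = 0 := by linarith
    rw [k01] at q1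
    rw [k02] at q2
    intro i j
    apply sq1
    fin_cases i <;> fin_cases j <;> simp [a0, a1, a2, k01, k02] <;>
      rw [← sq_le_one_iff_abs_le_one] <;>
      linarith [sq_nonneg (h 1 1), sq_nonneg (h 2 1), sq_nonneg (h 1 2), sq_nonneg (h 2 2)]
  · have k01 : h 0 1 = 0 := by simpa [hb] using c0
    have k21 : h 2 1 = 0 := by simpa [hb] using c2
    have k11 : h 1 1 = 1 := by simpa [hb] using c1
    rw [k01, k21, k11] at q01 q12 hd
    have k10 : h 1 0 = 0 := by linarith
    have k12 : h 1 2 = 0 := by linarith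
    rw [k10, k12] at hd
    rw [k10] at q0 q02
    rw [k12] at q2 q02
    generalize hA : h 0 0 = A at *
    have kD : h 2 2 = A := by
      linear_combination A * hd - h 2 2 * q0 + h 2 0 * q02
    have kC : h 2 0 = h 0 2 := by
      linear_combination -h 2 0 * hd + h 0 2 * q0 - A * q02
    rw [kC] at q0 a2
    rw [kD] at a2
    have e1 : A - h 0 2 = 1 := by linear_combination a0 - a2
    have e2 : A + h 0 2 = 1 := by linear_combination q0 - (A + h 0 2) * e1
    have kA : A = 1 := by linarith
    have kB : h 0 2 = 0 := by linarith
    have k00 : h 0 0 = 1 := hA.trans kA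
    rw [kA] at kD
    rw [kB] at kC
    intro i j
    apply sq1
    fin_cases i <;> fin_cases j <;> simp [k00, k01, k10, k11, k12, k21, kB, kC, kD]

/-- for every `w ∈ Ξ_N` the stabilizer `G_w = {g ∈ G : g·w = w}` is a
compact subset of the real `3×3` matrices. -/
theorem stmt_8 (w : Fin 3 → ℂ) (hw : w ∈ XiN) :
    IsCompact {g : Matrix (Fin 3) (Fin 3) ℝ | g ∈ Gso ∧ act g w = w} := by
  obtain ⟨g0, ⟨hg0, -, -⟩, z, rfl⟩ := hw
  rw [nmat_split, ← act_mul']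
  set m := g0 * nre z.re with hm
  set v := (nmat (z.im * Complex.I)).mulVec x0c with hv
  have hmo : mᵀ * eta3 * m = eta3 := by
    rw [hm, Matrix.transpose_mul]
    calc (nre z.re)ᵀ * g0ᵀ * eta3 * (g0 * nre z.re)
        = (nre z.re)ᵀ * (g0ᵀ * eta3 * g0) * nre z.re := by simp only [Matrix.mul_assoc]
      _ = eta3 := by rw [hg0, nre_orth]
  set m' := eta3 * mᵀ * eta3 with hm'
  have h1 : m' * m = 1 := by
    rw [hm', Matrix.mul_assoc, Matrix.mul_assoc, ← Matrix.mul_assoc mᵀ, hmo, eta_sq]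
  have h2 : m * m' = 1 := mul_eq_one_comm.mp h1
  have hmo' : m'ᵀ * eta3 * m' = eta3 := by
    calc m'ᵀ * eta3 * m' = m'ᵀ * (mᵀ * eta3 * m) * m' := by rw [hmo]
      _ = (m * m')ᵀ * eta3 * (m * m') := by
        rw [Matrix.transpose_mul m m']; simp only [Matrix.mul_assoc]
      _ = eta3 := by rw [h2]; simp
  have hK : IsCompact {h : Matrix (Fin 3) (Fin 3) ℝ | ∀ i j, h i j ∈ Set.Icc (-1 : ℝ) 1} := by
    have := isCompact_univ_pi (X := fun _ : Fin 3 => Fin 3 → ℝ)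
      (s := fun _ => Set.univ.pi fun _ => Set.Icc (-1 : ℝ) 1)
      (fun _ => isCompact_univ_pi fun _ => isCompact_Icc)
    have e : {h : Fin 3 → Fin 3 → ℝ | ∀ i j, h i j ∈ Set.Icc (-1 : ℝ) 1} =
        Set.univ.pi fun _ => Set.univ.pi fun _ => Set.Icc (-1 : ℝ) 1 := by
      ext h
      simp only [Set.mem_ofPred_eq, Set.mem_pi, Set.mem_univ, true_implies]
    rw [← e] at this
    exact this
  have hI : IsCompact ((fun h => m * h * m') ''
      {h : Matrix (Fin 3) (Fin 3) ℝ | ∀ i j, h i j ∈ Set.Icc (-1 : ℝ) 1}) :=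
    hK.image (by fun_prop)
  refine hI.of_isClosed_subset ?_ ?_
  · have : {g : Matrix (Fin 3) (Fin 3) ℝ | g ∈ Gso ∧ act g (act m v) = act m v} =
        {g | gᵀ * eta3 * g = eta3} ∩ {g | g.det = 1} ∩ {g | 1 ≤ g 0 0} ∩
          {g | act g (act m v) = act m v} := by
      ext g
      simp only [Gso, Set.mem_ofPred_eq, Set.mem_inter_iff]
      constructor
      · rintro ⟨⟨a, b, c⟩, d⟩
        refine ⟨⟨⟨a, b⟩, ?_⟩, d⟩
        have := (orth_entries g a).1.1
        nlinarith [sq_nonneg (g 1 0), sq_nonneg (g 2 0)]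
      · rintro ⟨⟨⟨a, b⟩, c⟩, d⟩
        exact ⟨⟨a, b, by linarith⟩, d⟩
    rw [this]
    refine ((IsClosed.inter ?_ ?_).inter ?_).inter ?_
    · exact isClosed_eq (by fun_prop) continuous_const
    · exact isClosed_eq (by fun_prop) continuous_const
    · exact isClosed_le continuous_const (by fun_prop)
    · refine isClosed_eq ?_ continuous_const
      unfold act
      fun_prop
  · rintro g ⟨⟨go, gd, -⟩, gf⟩
    refine ⟨m' * g * m, ?_, ?_⟩
    · apply key z.im
      · calc (m' * g * m)ᵀ * eta3 * (m' * g * m)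
            = mᵀ * (gᵀ * (m'ᵀ * eta3 * m') * g) * m := by
              simp only [Matrix.transpose_mul, Matrix.mul_assoc]
          _ = eta3 := by rw [hmo', go, hmo]
      · have := congrArg Matrix.det h1
        rw [Matrix.det_mul, Matrix.det_one] at this
        rw [Matrix.det_mul, Matrix.det_mul, gd, mul_one, this]
      · rw [act_mul', act_mul', gf, ← act_mul', h1, act_one']
    · change m * (m' * g * m) * m' = g
      calc m * (m' * g * m) * m' = (m * m') * g * (m * m') := by simp only [Matrix.mul_assoc]
        _ = g := by rw [h2]; simp
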